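/- Let p, q, r be the permutations of {0,…,20} given in cycle notation by p = (2 7)(3 11)(5 12)(8 18)(13 14)(15 17)(16 20), q = (0 17)(3 8)(4 12)(6 13)(9 19)(14 15)(16 18), r = (1 8)(2 16)(4 11)(5 19)(7 14)(10 17)(13 20), and p' = (0 1)(4 17)(7 12)(9 16)(10 20)(11 13)(15 19), q' = (0 20)(3 16)(6 11)(8 15)(9 19)(10 12)(14 18), r' = r. Let G be the subgroup of Sym(21) × Sym(21) generated by (p,p'), (q,q'), (r,r'), and let A = {(σ,τ) ∈ G : σ(0) = 0}, B = {(σ,τ) ∈ G : τ(0) = 0}. Then for every (σ,τ) ∈ G the number of fixed points of σ equals the number of fixed points of τ; A and B are Gassmann equivalent subgroups of G of index 21; and A and B are not conjugate in G. -/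

import Mathlib

open Equiv

/-- p = (2 7)(3 11)(5 12)(8 18)(13 14)(15 17)(16 20) -/
def p : Perm (Fin 21) := swap 2 7 * swap 3 11 * swap 5 12 * swap 8 18 * swap 13 14 * swap 15 17 * swap 16 20
/-- q = (0 17)(3 8)(4 12)(6 13)(9 19)(14 15)(16 18) -/
def q : Perm (Fin 21) := swap 0 17 * swap 3 8 * swap 4 12 * swap 6 13 * swap 9 19 * swap 14 15 * swap 16 18
/-- r = (1 8)(2 16)(4 11)(5 19)(7 14)(10 17)(13 20) -/
def r : Perm (Fin 21) := swap 1 8 * swap 2 16 * swap 4 11 * swap 5 19 * swap 7 14 * swap 10 17 * swap 13 20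
/-- p' = (0 1)(4 17)(7 12)(9 16)(10 20)(11 13)(15 19) -/
def p' : Perm (Fin 21) := swap 0 1 * swap 4 17 * swap 7 12 * swap 9 16 * swap 10 20 * swap 11 13 * swap 15 19
/-- q' = (0 20)(3 16)(6 11)(8 15)(9 19)(10 12)(14 18) -/
def q' : Perm (Fin 21) := swap 0 20 * swap 3 16 * swap 6 11 * swap 8 15 * swap 9 19 * swap 10 12 * swap 14 18
/-- r' = (1 8)(2 16)(4 11)(5 19)(7 14)(10 17)(13 20) -/
def r' : Perm (Fin 21) := swap 1 8 * swap 2 16 * swap 4 11 * swap 5 19 * swap 7 14 * swap 10 17 * swap 13 20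

/-- The subgroup of Sym(21) × Sym(21) generated by (p,p'), (q,q'), (r,r'). -/
def G₀ : Subgroup (Perm (Fin 21) × Perm (Fin 21)) :=
  Subgroup.closure {(p, p'), (q, q'), (r, r')}

/-- A = {(σ,τ) ∈ G₀ : σ 0 = 0}, the point stabilizer in the first action. -/
def A : Subgroup G₀ where
  carrier := {g | (g : Perm (Fin 21) × Perm (Fin 21)).1 0 = 0}
  one_mem' := rfl
  mul_mem' := by
    intro x y hx hy
    simp only [Set.mem_setOf_eq] at *
    simp [Subgroup.coe_mul, Perm.mul_apply, hx, hy]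
  inv_mem' := by
    intro x hx
    simp only [Set.mem_setOf_eq] at *
    conv_lhs => rw [← hx]
    simp

/-- B = {(σ,τ) ∈ G₀ : τ 0 = 0}, the point stabilizer in the second action. -/
def B : Subgroup G₀ where
  carrier := {g | (g : Perm (Fin 21) × Perm (Fin 21)).2 0 = 0}
  one_mem' := rfl
  mul_mem' := by
    intro x y hx hy
    simp only [Set.mem_setOf_eq] at *
    simp [Subgroup.coe_mul, Perm.mul_apply, hx, hy]
  inv_mem' := by
    intro x hx
    simp only [Set.mem_setOf_eq] at *
    conv_lhs => rw [← hx]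
    simp

namespace GassmannAux

/-- The three generators of `G₀`. -/
def gen : Fin 3 → Perm (Fin 21) × Perm (Fin 21) := ![(p, p'), (q, q'), (r, r')]

lemma gen_mem (i : Fin 3) : gen i ∈ G₀ := by
  apply Subgroup.subset_closure
  fin_cases i <;> simp [gen]

/-- The value of a word in the generators. -/
def word (w : List (Fin 3)) : G₀ :=
  ⟨(w.map gen).prod, Subgroup.list_prod_mem _ (by
    intro x hx
    obtain ⟨i, -, rfl⟩ := List.mem_map.1 hx
    exact gen_mem i)⟩

/-- Incidence of points and lines of PG(2,4), by a perfect difference set mod 21. -/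
def inc (x y : Fin 21) : Bool := [3, 6, 7, 12, 14].contains (x + y)

lemma inc_gen : ∀ i x y, inc ((gen i).1 x) ((gen i).2 y) = inc x y := by
  decide +kernel

lemma inc_mem (g : Perm (Fin 21) × Perm (Fin 21)) (hg : g ∈ G₀) :
    ∀ x y, inc (g.1 x) (g.2 y) = inc x y := by
  induction hg using Subgroup.closure_induction with
  | mem g hg =>
    rcases hg with rfl | rfl | rfl
    · exact inc_gen 0
    · exact inc_gen 1
    · exact inc_gen 2
  | one => intro x y; rfl
  | mul a b _ _ ha hb =>
    intro x y
    rw [← hb x y, ← ha (b.1 x) (b.2 y)]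
    rfl
  | inv a _ ha =>
    intro x y
    rw [← ha]
    simp

/-- The incidence matrix. -/
def nn (x y : Fin 21) : ℤ := if inc x y then 1 else 0

/-- Twenty times the inverse of the incidence matrix (indexed the same way). -/
def mm (x y : Fin 21) : ℤ := if inc x y then 4 else -1

lemma nm : ∀ x y, ∑ k, nn x k * mm y k = if x = y then 20 else 0 := by
  decide +kernel

lemma mn : ∀ k l, ∑ x, nn x k * mm x l = if l = k then 20 else 0 := by
  decide +kernel

lemma fix_eq (g : Perm (Fin 21) × Perm (Fin 21)) (hg : g ∈ G₀) :
    Nat.card {x : Fin 21 // g.1 x = x} = Nat.card {x : Fin 21 // g.2 x = x} := by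
  have hn : ∀ x y, nn (g.1 x) (g.2 y) = nn x y := fun x y => by
    simp only [nn, inc_mem g hg]
  have key : ∑ x, (if g.1 x = x then (20 : ℤ) else 0) = ∑ x, if g.2 x = x then (20 : ℤ) else 0 := by
    have e1 : ∀ x, (if g.1 x = x then (20 : ℤ) else 0) = ∑ k, nn (g.1 x) k * mm x k :=
      fun x => (nm _ _).symm
    have e2 : ∀ k, (if g.2 k = k then (20 : ℤ) else 0) = ∑ x, nn x k * mm x (g.2 k) :=
      fun k => (mn _ _).symm
    rw [Finset.sum_congr rfl fun x _ => e1 x, Finset.sum_congr rfl fun x _ => e2 x]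
    rw [Finset.sum_comm (s := Finset.univ) (t := Finset.univ) (f := fun x k => nn k x * mm k (g.2 x))]
    refine Finset.sum_congr rfl fun x _ => ?_
    rw [← Equiv.sum_comp g.2]
    simp_rw [hn]
  rw [Nat.card_eq_fintype_card, Nat.card_eq_fintype_card, Fintype.card_subtype,
    Fintype.card_subtype]
  simp only [← Finset.sum_filter, Finset.sum_const, nsmul_eq_mul] at key
  have h20 : (20 : ℤ) ≠ 0 := by norm_num
  exact_mod_cast mul_right_cancel₀ h20 key

/-- Words carrying 0 to each point in the first action. -/
def table1 : Fin 21 → List (Fin 3) :=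
  ![[],
    [2, 0, 1, 0, 2, 0, 1, 0, 1],
    [0, 2, 1, 0, 1],
    [1, 0, 1, 0, 2, 0, 1, 0, 1],
    [2, 0, 1, 0, 1, 0, 2, 0, 1, 0, 1],
    [0, 1, 2, 0, 1, 0, 1, 0, 2, 0, 1, 0, 1],
    [1, 0, 1, 0, 1],
    [2, 1, 0, 1],
    [0, 1, 0, 2, 0, 1, 0, 1],
    [1, 2, 0, 1, 2, 0, 1, 0, 1, 0, 2, 0, 1, 0, 1],
    [2, 1],
    [0, 1, 0, 1, 0, 2, 0, 1, 0, 1],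
    [1, 2, 0, 1, 0, 1, 0, 2, 0, 1, 0, 1],
    [0, 1, 0, 1],
    [1, 0, 1],
    [0, 1],
    [0, 2, 0, 1, 0, 1],
    [1],
    [1, 0, 2, 0, 1, 0, 1],
    [2, 0, 1, 2, 0, 1, 0, 1, 0, 2, 0, 1, 0, 1],
    [2, 0, 1, 0, 1]]

/-- Words carrying 0 to each point in the second action. -/
def table2 : Fin 21 → List (Fin 3) :=
  ![[],
    [0],
    [2, 0, 1, 0, 1, 2, 0],
    [1, 0, 1, 0, 1, 2, 0],
    [0, 2, 0, 1],
    [2, 0, 1, 2, 0],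
    [1, 0, 2, 1],
    [0, 1, 0, 1],
    [2, 0],
    [1, 0, 1, 2, 0],
    [0, 1],
    [0, 2, 1],
    [1, 0, 1],
    [2, 1],
    [2, 0, 1, 0, 1],
    [1, 2, 0],
    [0, 1, 0, 1, 2, 0],
    [2, 0, 1],
    [1, 2, 0, 1, 0, 1],
    [0, 1, 2, 0],
    [1]]

lemma trans1 : ∀ x, (word (table1 x)).1.1 0 = x := by
  decide +kernel

lemma trans2 : ∀ x, (word (table2 x)).1.2 0 = x := by
  decide +kernel

/-- The two projections. -/
def f1 : G₀ →* Perm (Fin 21) := (MonoidHom.fst _ _).comp G₀.subtype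
/-- The second projection. -/
def f2 : G₀ →* Perm (Fin 21) := (MonoidHom.snd _ _).comp G₀.subtype

section general
variable {G : Type*} [Group G]

lemma index_gen (f : G →* Perm (Fin 21)) (ht : ∀ x, ∃ g, f g 0 = x)
    (H : Subgroup G) (hH : ∀ g, g ∈ H ↔ f g 0 = 0) : H.index = 21 := by
  let e : G ⧸ H ≃ Fin 21 := Equiv.ofBijective
    (Quotient.lift (fun g : G => f g 0) (by
      intro a b hab
      have h := (hH _).1 (QuotientGroup.leftRel_apply.1 hab)
      simp only [map_mul, map_inv, Perm.mul_apply, Perm.inv_eq_iff_eq] at h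
      exact h.symm)) (by
      constructor
      · intro a b
        induction a using Quotient.inductionOn
        induction b using Quotient.inductionOn
        intro h
        apply Quotient.sound
        apply QuotientGroup.leftRel_apply.2
        rw [hH]
        simp only [map_mul, map_inv, Perm.mul_apply, Perm.inv_eq_iff_eq]
        exact h.symm
      · intro x
        obtain ⟨g, hg⟩ := ht x
        exact ⟨Quotient.mk _ g, hg⟩)
  rw [Subgroup.index, Nat.card_congr e, Nat.card_eq_fintype_card, Fintype.card_fin]

lemma class_count [Finite G] (f : G →* Perm (Fin 21)) (ht : ∀ x, ∃ g, f g 0 = x)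
    (H : Subgroup G) (hH : ∀ g, g ∈ H ↔ f g 0 = 0) (g : G) :
    21 * Nat.card ((H : Set G) ∩ {x : G | IsConj g x} : Set G) =
      Nat.card (Σ h : {x : G // IsConj g x}, {x : Fin 21 // f h.1 x = x}) := by
  choose t ht using ht
  have e : Fin 21 × ((H : Set G) ∩ {x : G | IsConj g x} : Set G) ≃
      (Σ h : {x : G // IsConj g x}, {x : Fin 21 // f h.1 x = x}) :=
    { toFun := fun z => ⟨⟨t z.1 * z.2.1 * (t z.1)⁻¹,
          z.2.2.2.trans (isConj_iff.2 ⟨t z.1, rfl⟩)⟩, ⟨z.1, by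
            have h0 : (f (t z.1))⁻¹ z.1 = 0 := by rw [Perm.inv_eq_iff_eq, ht]
            have h1 := (hH _).1 z.2.2.1
            simp only [map_mul, map_inv, Perm.mul_apply, h0, h1, ht]⟩⟩
      invFun := fun z => (z.2.1, ⟨(t z.2.1)⁻¹ * z.1.1 * t z.2.1, by
        constructor
        · refine (hH _).2 ?_
          simp only [map_mul, map_inv, Perm.mul_apply, ht, z.2.2]
          rw [Perm.inv_eq_iff_eq, ht]
        · exact z.1.2.trans (isConj_iff.2 ⟨(t z.2.1)⁻¹, by simp⟩)⟩)
      left_inv := by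
        rintro ⟨x, h, hh⟩
        simp [mul_assoc]
      right_inv := by
        rintro ⟨⟨h, hh⟩, x, hx⟩
        have : t x * ((t x)⁻¹ * h * t x) * (t x)⁻¹ = h := by group
        simp only
        congr! 1
        · simp [this]
        · congr! 1
          funext y
          simp [this] }
  rw [← Nat.card_congr e, Nat.card_prod, Nat.card_eq_fintype_card (α := Fin 21), Fintype.card_fin]

end general

lemma moved : ∀ y : Fin 21,
    ¬ ((word [2]).1.1 y = y ∧ (word [0, 1, 0]).1.1 y = y ∧
      (word [1, 0, 1, 2, 1, 0, 1]).1.1 y = y ∧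
      (word [1, 0, 2, 0, 1, 0, 2, 0, 1]).1.1 y = y) := by
  decide +kernel

lemma inB : (word [2]).1.2 0 = 0 ∧ (word [0, 1, 0]).1.2 0 = 0 ∧
      (word [1, 0, 1, 2, 1, 0, 1]).1.2 0 = 0 ∧
      (word [1, 0, 2, 0, 1, 0, 2, 0, 1]).1.2 0 = 0 := by
  decide +kernel

end GassmannAux

open GassmannAux in
/-- Every element of `G₀` has equally many fixed points in its two coordinates; the point
stabilizers `A` and `B` are Gassmann equivalent of index 21, but not conjugate. -/
theorem fixed_gassmann_not_conjugate :
    (∀ p ∈ G₀, Nat.card {x : Fin 21 // p.1 x = x} = Nat.card {x : Fin 21 // p.2 x = x}) ∧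
    (∀ g : G₀,
      Nat.card ((A : Set G₀) ∩ {x : G₀ | IsConj g x} : Set G₀) =
      Nat.card ((B : Set G₀) ∩ {x : G₀ | IsConj g x} : Set G₀)) ∧
    A.index = 21 ∧ B.index = 21 ∧
    ¬ ∃ x : G₀, Subgroup.map (MulAut.conj x).toMonoidHom A = B := by
  have t1 : ∀ x, ∃ g, f1 g 0 = x := fun x => ⟨word (table1 x), trans1 x⟩
  have t2 : ∀ x, ∃ g, f2 g 0 = x := fun x => ⟨word (table2 x), trans2 x⟩
  have hA : ∀ g, g ∈ A ↔ f1 g 0 = 0 := fun g => Iff.rfl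
  have hB : ∀ g, g ∈ B ↔ f2 g 0 = 0 := fun g => Iff.rfl
  refine ⟨fix_eq, ?_, index_gen f1 t1 A hA, index_gen f2 t2 B hB, ?_⟩
  · intro g
    have h1 := class_count f1 t1 A hA g
    have h2 := class_count f2 t2 B hB g
    have e : Nat.card (Σ h : {x : G₀ // IsConj g x}, {x : Fin 21 // f1 h.1 x = x}) =
        Nat.card (Σ h : {x : G₀ // IsConj g x}, {x : Fin 21 // f2 h.1 x = x}) := by
      classical
      have : Fintype {x : G₀ // IsConj g x} := Fintype.ofFinite _
      rw [Nat.card_sigma, Nat.card_sigma]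
      exact Finset.sum_congr rfl fun h _ => fix_eq h.1.1 h.1.2
    omega
  · rintro ⟨x, hx⟩
    have key : ∀ b : G₀, b.1.2 0 = 0 → b.1.1 (x.1.1 0) = x.1.1 0 := by
      intro b hb
      have hb' : b ∈ B := hb
      rw [← hx] at hb'
      obtain ⟨a, ha, rfl⟩ := Subgroup.mem_map.1 hb'
      have ha' : a.1.1 0 = 0 := ha
      simp [ha']
    obtain ⟨h1, h2, h3, h4⟩ := inB
    exact moved (x.1.1 0) ⟨key _ h1, key _ h2, key _ h3, key _ h4⟩
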